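/- arXiv:2602.00842 — 2 statements merged into one kernel-verified Lean document; each statement's English description precedes it below -/
import Mathlib

section
/- Let i, j ∈ ℍ denote the standard quaternion units. Define M(A,B) = (A⁻¹B, A⁻¹ i B) for unit quaternions A, B. Then: (i) M(A,B) lies in UTS³ := {(C,D) ∈ SU(2) × SU(2) : Re((star C)·D) = 0}; (ii) M maps SU(2) × SU(2) onto UTS³; (iii) for unit quaternions A, B, A′, B′, one has M(A,B) = M(A′,B′) if and only if there exists θ ∈ ℝ with A′ = exp(θ·i)·A and B′ = exp(θ·i)·B; (iv) M(j B j⁻¹, j A j⁻¹) = (j·star(C)·j⁻¹, j·star(D)·j⁻¹) where (C,D) = M(A,B). -/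
noncomputable section

/-- The standard quaternion unit `i`. -/
def qi : Quaternion ℝ := ⟨0, 1, 0, 0⟩

/-- The standard quaternion unit `j`. -/
def qj : Quaternion ℝ := ⟨0, 0, 1, 0⟩

/-- The map `M(A,B) = (A⁻¹B, A⁻¹ i B)`. -/
def Mmap (A B : Quaternion ℝ) : Quaternion ℝ × Quaternion ℝ := (A⁻¹ * B, A⁻¹ * qi * B)

/-- `exp(θ·i) = cos θ + (sin θ)·i` in the quaternions. -/
def expI (θ : ℝ) : Quaternion ℝ := ((Real.cos θ : ℝ) : Quaternion ℝ) + Real.sin θ • qi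

/-!
If `B = A * C`, then `M(A, B) = (C, P * C)` with `P = A⁻¹ i A`, so `M` amounts to the Hopf map
`A ↦ A⁻¹ i A` from unit quaternions to imaginary unit quaternions, taken alongside `C`. The fibres
of the Hopf map are the orbits of the centralizer of `i`, which is the circle `expI`. It is onto
because `i` and `P` are exchanged by the half-turn about `i + P` (or by `j` when `P = -i`).
If `M(A, B) = (C, D)`, then `M(B, A) = (C⁻¹, -D⁻¹)` because `i⁻¹ = -i`; conjugating `A` and `B` by
`j`, which negates `i`, removes the sign.
-/

theorem semiconjBy_add_of_mul_self_eq {R : Type*} [NonUnitalNonAssocSemiring R] {p q : R}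
    (h : p * p = q * q) : SemiconjBy (q + p) p q := by
  rw [SemiconjBy, add_mul, mul_add, h, add_comm]

theorem re_mul_comm {R : Type*} [CommRing R] (a b : Quaternion R) : (a * b).re = (b * a).re := by
  simp only [Quaternion.re_mul]
  ring

theorem ne_zero_of_norm_eq_one {E : Type*} [SeminormedAddGroup E] {x : E} (h : ‖x‖ = 1) : x ≠ 0 :=
  ne_zero_of_norm_ne_zero (h ▸ one_ne_zero)

section Quaternion

variable {p q U : Quaternion ℝ}

theorem norm_eq_sqrt_normSq (q : Quaternion ℝ) : ‖q‖ = √(Quaternion.normSq q) := by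
  rw [Quaternion.normSq_eq_norm_mul_self, Real.sqrt_mul_self (norm_nonneg q)]

theorem star_eq_inv_of_norm_eq_one (h : ‖q‖ = 1) : star q = q⁻¹ := by
  rw [Quaternion.inv_def, Quaternion.normSq_eq_norm_mul_self, h, mul_one, inv_one, one_smul]

theorem mul_self_eq_mul_self_of_re_eq_zero (hp : p.re = 0) (hq : q.re = 0) (h : ‖p‖ = ‖q‖) :
    p * p = q * q := by
  rw [← sq, ← sq, Quaternion.sq_eq_neg_normSq.mpr hp, Quaternion.sq_eq_neg_normSq.mpr hq,
    Quaternion.normSq_eq_norm_mul_self, Quaternion.normSq_eq_norm_mul_self, h]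

attribute [simps] qi qj

theorem star_qi : star qi = -qi := Quaternion.star_eq_neg.mpr re_qi

theorem norm_qi : ‖qi‖ = 1 := by
  rw [norm_eq_sqrt_normSq, Quaternion.normSq_def']
  simp

theorem norm_qj : ‖qj‖ = 1 := by
  rw [norm_eq_sqrt_normSq, Quaternion.normSq_def']
  simp

theorem qi_inv : qi⁻¹ = -qi := by
  rw [← star_eq_inv_of_norm_eq_one norm_qi, star_qi]

theorem semiconjBy_qj_neg_qi : SemiconjBy qj (-qi) qi := by
  ext <;> simp

theorem exists_norm_eq_one_semiconjBy_qi (hp : ‖p‖ = 1) (hre : p.re = 0) :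
    ∃ A : Quaternion ℝ, ‖A‖ = 1 ∧ SemiconjBy A p qi := by
  by_cases h0 : qi + p = 0
  · rw [← neg_eq_of_add_eq_zero_right h0]
    exact ⟨qj, norm_qj, semiconjBy_qj_neg_qi⟩
  · have hsemi : SemiconjBy (qi + p) p qi := semiconjBy_add_of_mul_self_eq <|
      mul_self_eq_mul_self_of_re_eq_zero hre re_qi (hp.trans norm_qi.symm)
    exact ⟨(‖qi + p‖⁻¹ : ℝ) • (qi + p), norm_smul_inv_norm h0, by
      rw [SemiconjBy, smul_mul_assoc, mul_smul_comm, hsemi.eq]⟩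

theorem norm_coeComplex (z : ℂ) : ‖(z : Quaternion ℝ)‖ = ‖z‖ := by
  rw [norm_eq_sqrt_normSq, Quaternion.normSq_def', Complex.norm_def, Complex.normSq_apply]
  simp [sq]

theorem expI_eq_coeComplex (θ : ℝ) : expI θ = (Complex.exp (θ * Complex.I) : ℂ) := by
  ext <;> simp [expI, Complex.exp_ofReal_mul_I_re, Complex.exp_ofReal_mul_I_im]

theorem commute_qi_iff_exists_coeComplex : Commute U qi ↔ ∃ z : ℂ, (z : Quaternion ℝ) = U := by
  constructor
  · intro h
    have hJ := congrArg QuaternionAlgebra.imJ h.eq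
    have hK := congrArg QuaternionAlgebra.imK h.eq
    simp only [Quaternion.imJ_mul, Quaternion.imK_mul, re_qi, imI_qi, imJ_qi, imK_qi] at hJ hK
    refine ⟨⟨U.re, U.imI⟩, ?_⟩
    ext <;> simp <;> linarith
  · rintro ⟨z, rfl⟩
    ext <;> simp

theorem norm_eq_one_and_commute_qi_iff : ‖U‖ = 1 ∧ Commute U qi ↔ ∃ θ : ℝ, U = expI θ := by
  simp only [commute_qi_iff_exists_coeComplex, expI_eq_coeComplex]
  constructor
  · rintro ⟨hU, z, rfl⟩
    obtain ⟨θ, rfl⟩ := (Complex.norm_eq_one_iff z).mp (norm_coeComplex z ▸ hU)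
    exact ⟨θ, rfl⟩
  · rintro ⟨θ, rfl⟩
    exact ⟨by rw [norm_coeComplex, Complex.norm_exp_ofReal_mul_I], _, rfl⟩

end Quaternion

section Mmap

variable {A B A' B' C D P U : Quaternion ℝ}

theorem norm_Mmap_fst (A B : Quaternion ℝ) : ‖(Mmap A B).1‖ = ‖B‖ / ‖A‖ := by
  rw [Mmap, norm_mul, norm_inv, div_eq_inv_mul]

theorem norm_Mmap_snd (A B : Quaternion ℝ) : ‖(Mmap A B).2‖ = ‖B‖ / ‖A‖ := by
  rw [Mmap, norm_mul, norm_mul, norm_inv, norm_qi, mul_one, div_eq_inv_mul]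

theorem re_star_Mmap_fst_mul_snd (A B : Quaternion ℝ) :
    (star (Mmap A B).1 * (Mmap A B).2).re = 0 := by
  have hfactor : star (Mmap A B).1 * (Mmap A B).2 =
      Quaternion.normSq A⁻¹ • (star B * qi * B) := by
    rw [Mmap, star_mul, mul_assoc A⁻¹, mul_assoc, ← mul_assoc (star A⁻¹),
      Quaternion.star_mul_self, Quaternion.coe_mul_eq_smul, mul_smul_comm, mul_assoc]
  have hskew : star (star B * qi * B) = -(star B * qi * B) := by
    rw [star_mul, star_mul, star_star, star_qi, neg_mul, mul_neg, mul_assoc]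
  rw [hfactor, Quaternion.re_smul, Quaternion.star_eq_neg.mp hskew, smul_zero]

theorem Mmap_mul_of_semiconjBy (hA : A ≠ 0) (h : SemiconjBy A P qi) (C : Quaternion ℝ) :
    Mmap A (A * C) = (C, P * C) := by
  rw [Mmap, inv_mul_cancel_left₀ hA, mul_assoc, ← mul_assoc qi, ← h.eq, mul_assoc,
    inv_mul_cancel_left₀ hA]

theorem exists_Mmap_eq (hC : C ≠ 0) (hnorm : ‖C‖ = ‖D‖) (horth : (star C * D).re = 0) :
    ∃ A B : Quaternion ℝ, ‖A‖ = 1 ∧ ‖B‖ = ‖C‖ ∧ Mmap A B = (C, D) := by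
  have hP : ‖D * C⁻¹‖ = 1 := by
    rw [norm_mul, norm_inv, hnorm, mul_inv_cancel₀ (hnorm ▸ norm_ne_zero_iff.mpr hC)]
  have hre : (D * C⁻¹).re = 0 := by
    rw [Quaternion.inv_def, mul_smul_comm, Quaternion.re_smul, re_mul_comm, horth, smul_zero]
  obtain ⟨A, hA, hsemi⟩ := exists_norm_eq_one_semiconjBy_qi hP hre
  have hA0 : A ≠ 0 := ne_zero_of_norm_eq_one hA
  refine ⟨A, A * C, hA, by rw [norm_mul, hA, one_mul], ?_⟩
  rw [Mmap_mul_of_semiconjBy hA0 hsemi, inv_mul_cancel_right₀ hC]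

theorem Mmap_mul_left_of_commute (hU : U ≠ 0) (h : Commute U qi) (A B : Quaternion ℝ) :
    Mmap (U * A) (U * B) = Mmap A B := by
  simp only [Mmap, mul_inv_rev, mul_assoc, inv_mul_cancel_left₀ hU, h.symm.left_comm]

theorem Mmap_eq_iff_exists_commute (hA : A ≠ 0) (hB : B ≠ 0) (hA' : A' ≠ 0) :
    Mmap A B = Mmap A' B' ↔
      ∃ U : Quaternion ℝ, U ≠ 0 ∧ Commute U qi ∧ A' = U * A ∧ B' = U * B := by
  constructor
  · intro h
    obtain ⟨hfst, hsnd⟩ := Prod.mk.inj h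
    have hB' : B' = A' * A⁻¹ * B := by rw [mul_assoc, hfst, mul_inv_cancel_left₀ hA']
    have hcomm : Commute (A' * A⁻¹) qi := mul_right_cancel₀ hB <| calc
      A' * A⁻¹ * qi * B = A' * (A⁻¹ * qi * B) := by simp only [mul_assoc]
      _ = qi * B' := by rw [hsnd, mul_assoc, mul_inv_cancel_left₀ hA']
      _ = qi * (A' * A⁻¹) * B := by rw [hB', ← mul_assoc]
    exact ⟨A' * A⁻¹, mul_ne_zero hA' (inv_ne_zero hA), hcomm,
      (inv_mul_cancel_right₀ hA A').symm, hB'⟩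
  · rintro ⟨U, hU, hcomm, rfl, rfl⟩
    exact (Mmap_mul_left_of_commute hU hcomm A B).symm

theorem Mmap_eq_iff_exists_expI (hA : A ≠ 0) (hB : B ≠ 0) (hnorm : ‖A‖ = ‖A'‖) :
    Mmap A B = Mmap A' B' ↔ ∃ θ : ℝ, A' = expI θ * A ∧ B' = expI θ * B := by
  have hA' : A' ≠ 0 := norm_ne_zero_iff.mp (hnorm ▸ norm_ne_zero_iff.mpr hA)
  rw [Mmap_eq_iff_exists_commute hA hB hA']
  constructor
  · rintro ⟨U, -, hcomm, rfl, rfl⟩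
    have hU : ‖U‖ = 1 := by
      rw [norm_mul] at hnorm
      exact (right_eq_mul₀ (norm_ne_zero_iff.mpr hA)).mp hnorm
    obtain ⟨θ, rfl⟩ := norm_eq_one_and_commute_qi_iff.mp ⟨hU, hcomm⟩
    exact ⟨θ, rfl, rfl⟩
  · rintro ⟨θ, hAθ, hBθ⟩
    have hcomm : Commute (expI θ) qi := (norm_eq_one_and_commute_qi_iff.mpr ⟨θ, rfl⟩).2
    exact ⟨expI θ, left_ne_zero_of_mul (hAθ ▸ hA'), hcomm, hAθ, hBθ⟩

theorem Mmap_conj_qj (A B : Quaternion ℝ) :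
    Mmap (qj * B * qj⁻¹) (qj * A * qj⁻¹) =
      (qj * (Mmap A B).1⁻¹ * qj⁻¹, qj * (Mmap A B).2⁻¹ * qj⁻¹) := by
  have hqj : qj ≠ 0 := ne_zero_of_norm_eq_one norm_qj
  have hconj : qj⁻¹ * (qi * qj) = qi⁻¹ := by
    rw [← semiconjBy_qj_neg_qi.eq, inv_mul_cancel_left₀ hqj, qi_inv]
  have hconj_mul : qj⁻¹ * (qi * (qj * (A * qj⁻¹))) = qi⁻¹ * (A * qj⁻¹) := by
    rw [← hconj, mul_assoc, mul_assoc]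
  simp only [Mmap, mul_inv_rev, inv_inv, mul_assoc, inv_mul_cancel_left₀ hqj, hconj_mul]

theorem Mmap_conj_qj_eq_star (hA : A ≠ 0) (hnorm : ‖A‖ = ‖B‖) :
    Mmap (qj * B * qj⁻¹) (qj * A * qj⁻¹) =
      (qj * star (Mmap A B).1 * qj⁻¹, qj * star (Mmap A B).2 * qj⁻¹) := by
  have hone : ‖B‖ / ‖A‖ = 1 := by rw [hnorm, div_self (hnorm ▸ norm_ne_zero_iff.mpr hA)]
  rw [Mmap_conj_qj, star_eq_inv_of_norm_eq_one ((norm_Mmap_fst A B).trans hone),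
    star_eq_inv_of_norm_eq_one ((norm_Mmap_snd A B).trans hone)]

end Mmap

theorem Mmap_principal_circle_bundle_general :
    (∀ A B : Quaternion ℝ, A ≠ 0 →
      ‖(Mmap A B).1‖ = ‖B‖ / ‖A‖ ∧ ‖(Mmap A B).2‖ = ‖B‖ / ‖A‖ ∧
        (star (Mmap A B).1 * (Mmap A B).2).re = 0) ∧
    (∀ C D : Quaternion ℝ, C ≠ 0 → ‖C‖ = ‖D‖ → (star C * D).re = 0 →
      ∃ A B : Quaternion ℝ, ‖A‖ = 1 ∧ ‖B‖ = ‖C‖ ∧ Mmap A B = (C, D)) ∧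
    (∀ A B A' B' : Quaternion ℝ, A ≠ 0 → B ≠ 0 → ‖A‖ = ‖A'‖ →
      (Mmap A B = Mmap A' B' ↔ ∃ θ : ℝ, A' = expI θ * A ∧ B' = expI θ * B)) ∧
    (∀ A B : Quaternion ℝ, A ≠ 0 → ‖A‖ = ‖B‖ →
      Mmap (qj * B * qj⁻¹) (qj * A * qj⁻¹) =
        (qj * star (Mmap A B).1 * qj⁻¹, qj * star (Mmap A B).2 * qj⁻¹)) :=
  ⟨fun A B _ => ⟨norm_Mmap_fst A B, norm_Mmap_snd A B, re_star_Mmap_fst_mul_snd A B⟩,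
    fun _ _ => exists_Mmap_eq,
    fun _ _ _ _ => Mmap_eq_iff_exists_expI,
    fun _ _ => Mmap_conj_qj_eq_star⟩

/-- The map `M(A,B) = (A⁻¹B, A⁻¹ i B)` on pairs of unit quaternions:
(i) it takes values in `UTS³ = {(C,D) ∈ SU(2)² : Re(C̄ D) = 0}`; (ii) it is onto `UTS³`;
(iii) `M(A,B) = M(A′,B′)` iff `(A′,B′) = (exp(θi)A, exp(θi)B)` for some `θ ∈ ℝ`;
(iv) `M(jBj⁻¹, jAj⁻¹) = (j C̄ j⁻¹, j D̄ j⁻¹)` where `(C,D) = M(A,B)`. -/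
theorem Mmap_principal_circle_bundle :
    (∀ A B : Quaternion ℝ, ‖A‖ = 1 → ‖B‖ = 1 →
      ‖(Mmap A B).1‖ = 1 ∧ ‖(Mmap A B).2‖ = 1 ∧ (star (Mmap A B).1 * (Mmap A B).2).re = 0) ∧
    (∀ C D : Quaternion ℝ, ‖C‖ = 1 → ‖D‖ = 1 → (star C * D).re = 0 →
      ∃ A B : Quaternion ℝ, ‖A‖ = 1 ∧ ‖B‖ = 1 ∧ Mmap A B = (C, D)) ∧
    (∀ A B A' B' : Quaternion ℝ, ‖A‖ = 1 → ‖B‖ = 1 → ‖A'‖ = 1 → ‖B'‖ = 1 →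
      (Mmap A B = Mmap A' B' ↔ ∃ θ : ℝ, A' = expI θ * A ∧ B' = expI θ * B)) ∧
    (∀ A B : Quaternion ℝ, ‖A‖ = 1 → ‖B‖ = 1 →
      Mmap (qj * B * qj⁻¹) (qj * A * qj⁻¹) =
        (qj * star (Mmap A B).1 * qj⁻¹, qj * star (Mmap A B).2 * qj⁻¹)) := by
  obtain ⟨maps, onto, fibre, conj⟩ := Mmap_principal_circle_bundle_general
  exact ⟨
    fun A B hA hB => by simpa only [hA, hB, div_one] using maps A B (ne_zero_of_norm_eq_one hA),
    fun C D hC hD => by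
      simpa only [hC] using onto C D (ne_zero_of_norm_eq_one hC) (hC.trans hD.symm),
    fun A B A' B' hA hB hA' _ => fibre A B A' B' (ne_zero_of_norm_eq_one hA)
      (ne_zero_of_norm_eq_one hB) (hA.trans hA'.symm),
    fun A B hA hB => conj A B (ne_zero_of_norm_eq_one hA) (hA.trans hB.symm)⟩
end
end

section
/- For any unit quaternions a, b, setting x = Re a, y = Re b, z = Re(a·star b), the real part of the commutator satisfies Re(a·b·a⁻¹·b⁻¹) = 2(x² + y² + z² − 2xyz) − 1. -/
/-!
Every quaternion satisfies `star q = 2 Re q - q`. For `q = a * star b` this turns the middle of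
`a * b * star a * star b` around, giving `2 Re (a * star b) • (a * star b) - a ^ 2 * star b ^ 2`,
and the quadratic equation `q ^ 2 = 2 Re q • q - normSq q` of `a` and of `star b` linearizes the
second term.
-/

section

open Quaternion

section CommRing

variable {R : Type*} [CommRing R]

lemma sq_eq_two_re_smul_sub_normSq (a : ℍ[R]) : a ^ 2 = (2 * a.re) • a - normSq a := by
  rw [← self_mul_star, star_eq_two_re_sub, mul_sub, mul_coe_eq_smul, sub_sub_cancel, sq]

lemma re_sq_mul_sq (a b : ℍ[R]) :
    (a ^ 2 * b ^ 2).re =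
      4 * a.re * b.re * (a * b).re - 2 * a.re ^ 2 * normSq b - 2 * b.re ^ 2 * normSq a
        + normSq a * normSq b := by
  rw [sq_eq_two_re_smul_sub_normSq a, sq_eq_two_re_smul_sub_normSq b]
  simp only [sub_mul, mul_sub, smul_mul_smul_comm, mul_coe_eq_smul, coe_mul_eq_smul, re_sub,
    re_smul, re_coe, smul_eq_mul]
  ring

lemma mul_mul_star_mul_star_eq_two_re_smul_sub (a b : ℍ[R]) :
    a * b * star a * star b = (2 * (a * star b).re) • (a * star b) - a ^ 2 * star b ^ 2 := by
  have mul_star_swap : b * star a = ↑(2 * (a * star b).re) - a * star b := by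
    rw [← star_eq_two_re_sub, star_mul, star_star]
  calc a * b * star a * star b = a * (b * star a) * star b := by simp only [mul_assoc]
    _ = (2 * (a * star b).re) • (a * star b) - a ^ 2 * star b ^ 2 := by
      simp only [mul_star_swap, mul_sub, sub_mul, mul_coe_eq_smul, smul_mul_assoc, sq, mul_assoc]

lemma re_mul_mul_star_mul_star (a b : ℍ[R]) :
    (a * b * star a * star b).re =
      2 * (a.re ^ 2 * normSq b + b.re ^ 2 * normSq a + (a * star b).re ^ 2
        - 2 * a.re * b.re * (a * star b).re) - normSq a * normSq b := by
  rw [mul_mul_star_mul_star_eq_two_re_smul_sub, re_sub, re_smul, smul_eq_mul, re_sq_mul_sq,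
    re_star, normSq_star]
  ring

end CommRing

lemma normSq_eq_one_of_norm_eq_one {a : ℍ[ℝ]} (ha : ‖a‖ = 1) : normSq a = 1 := by
  rw [normSq_eq_norm_mul_self, ha, mul_one]

theorem re_commutator_general {R : Type*} [Field R] [LinearOrder R] [IsStrictOrderedRing R]
    {a b : ℍ[R]} (ha : a ≠ 0) (hb : b ≠ 0) :
    (a * b * a⁻¹ * b⁻¹).re =
      2 * (a.re ^ 2 / normSq a + b.re ^ 2 / normSq b
        + ((a * star b).re ^ 2 - 2 * a.re * b.re * (a * star b).re) / (normSq a * normSq b))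
        - 1 := by
  have normSq_a_ne_zero : normSq a ≠ 0 := normSq_ne_zero.mpr ha
  have normSq_b_ne_zero : normSq b ≠ 0 := normSq_ne_zero.mpr hb
  have inv_to_star : a * b * a⁻¹ * b⁻¹ =
      ((normSq b)⁻¹ * (normSq a)⁻¹) • (a * b * star a * star b) := by
    simp only [inv_def, mul_smul_comm, smul_mul_assoc, smul_smul]
  rw [inv_to_star, re_smul, smul_eq_mul, re_mul_mul_star_mul_star]
  field_simp
  ring

end

/-- For unit quaternions `a, b` with `x = Re a`, `y = Re b`, `z = Re(a·star b)`, the real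
part of the commutator satisfies `Re(aba⁻¹b⁻¹) = 2(x² + y² + z² − 2xyz) − 1`. -/
theorem re_commutator (a b : Quaternion ℝ) (ha : ‖a‖ = 1) (hb : ‖b‖ = 1) :
    (a * b * a⁻¹ * b⁻¹).re =
      2 * (a.re ^ 2 + b.re ^ 2 + (a * star b).re ^ 2
        - 2 * a.re * b.re * (a * star b).re) - 1 := by
  rw [re_commutator_general (ne_zero_of_norm_ne_zero (by simp [ha]))
    (ne_zero_of_norm_ne_zero (by simp [hb]))]
  simp only [normSq_eq_one_of_norm_eq_one, ha, hb, div_one, mul_one, add_sub_assoc]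
end
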